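/- Theorem 1 (Asymptotic Convergence). Almost surely, for every sufficiently large n each row Z^m_n is nonzero, and the graph fusion encoder embedding of the distinguished vertex converges to the corresponding row of the row-normalized concatenated block matrix: ‖ [Z^1_n/‖Z^1_n‖₂ | … | Z^M_n/‖Z^M_n‖₂] − B̃(y,:) ‖₂ → 0 as n → ∞, where B̃(y,:) = [B_1(y,:)/‖B_1(y,:)‖₂ | … | B_M(y,:)/‖B_M(y,:)‖₂] ∈ ℝ^{MK}. -/

import Mathlib

open MeasureTheory ProbabilityTheory Filter
open scoped ProbabilityTheory

/-- The joint family of labels, degree parameters and per-graph uniforms, indexed by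
`ℕ ⊕ (ℕ ⊕ Fin M × ℕ)`. Asserting that this family is (jointly) independent expresses that each
of the `M + 2` families is an independent family and that all families are mutually
independent. -/
def multigraphFamily {Ω : Type*} {K M : ℕ}
    (Y : ℕ → Ω → Fin K) (θ : ℕ → Ω → ℝ) (U : Fin M → ℕ → Ω → ℝ) :
    ∀ i : ℕ ⊕ (ℕ ⊕ Fin M × ℕ),
      Ω → Sum.elim (fun _ : ℕ => Fin K) (fun _ : ℕ ⊕ Fin M × ℕ => ℝ) i
  | Sum.inl j => Y j
  | Sum.inr (Sum.inl j) => θ j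
  | Sum.inr (Sum.inr (m, j)) => U m j

/-- The corresponding family of measurable-space structures on the codomains. -/
def multigraphMS (K M : ℕ) :
    ∀ i : ℕ ⊕ (ℕ ⊕ Fin M × ℕ),
      MeasurableSpace (Sum.elim (fun _ : ℕ => Fin K) (fun _ : ℕ ⊕ Fin M × ℕ => ℝ) i)
  | Sum.inl _ => inferInstanceAs (MeasurableSpace (Fin K))
  | Sum.inr _ => inferInstanceAs (MeasurableSpace ℝ)

lemma core_slln {Ω ι : Type*} [MeasureSpace Ω] [IsProbabilityMeasure (ℙ : Measure Ω)]
    [DecidableEq ι]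
    (W : ι → Ω → ℝ) (hW : iIndepFun W ℙ) (hm : ∀ i, Measurable (W i))
    (p q r : ℕ → ι) (hp : p.Injective) (hq : q.Injective) (hr : r.Injective)
    (hpq : ∀ i j, p i ≠ q j) (hpr : ∀ i j, p i ≠ r j) (hqr : ∀ i j, q i ≠ r j)
    (ep : ∀ j, Measure.map (W (p j)) ℙ = Measure.map (W (p 0)) ℙ)
    (eq : ∀ j, Measure.map (W (q j)) ℙ = Measure.map (W (q 0)) ℙ)
    (er : ∀ j, Measure.map (W (r j)) ℙ = Measure.map (W (r 0)) ℙ)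
    (F : (ℝ × ℝ) × ℝ → ℝ) (hF : Measurable F) (hb : ∀ x, ‖F x‖ ≤ 1) :
    ∀ᵐ ω ∂(ℙ : Measure Ω), Tendsto (fun n : ℕ =>
      (∑ j ∈ Finset.range n, F ((W (p j) ω, W (q j) ω), W (r j) ω)) / n) atTop
      (nhds (∫ ω, F ((W (p 0) ω, W (q 0) ω), W (r 0) ω))) := by
  have hmeas : ∀ j, Measurable (fun ω => ((W (p j) ω, W (q j) ω), W (r j) ω)) := fun j =>
    ((hm _).prodMk (hm _)).prodMk (hm _)
  refine strong_law_ae_real (fun j ω => F ((W (p j) ω, W (q j) ω), W (r j) ω)) ?_ ?_ ?_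
  · exact Integrable.of_bound (hF.comp (hmeas 0)).aestronglyMeasurable 1
      (Eventually.of_forall fun ω => hb _)
  · intro i j hij
    have hd : Disjoint ({p i, q i, r i} : Finset ι) {p j, q j, r j} := by
      rw [Finset.disjoint_left]
      intro a ha hb
      simp only [Finset.mem_insert, Finset.mem_singleton] at ha hb
      rcases ha with rfl | rfl | rfl <;> rcases hb with h | h | h
      · exact hij (hp h)
      · exact hpq _ _ h
      · exact hpr _ _ h
      · exact hpq _ _ h.symm
      · exact hij (hq h)
      · exact hqr _ _ h
      · exact hpr _ _ h.symm
      · exact hqr _ _ h.symm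
      · exact hij (hr h)
    have h := hW.indepFun_finset _ _ hd hm
    have key : ∀ i : ℕ, Measurable (fun v : (({p i, q i, r i} : Finset ι) → ℝ) =>
        F ((v ⟨p i, by simp⟩, v ⟨q i, by simp⟩), v ⟨r i, by simp⟩)) := fun i =>
      hF.comp (((measurable_pi_apply _).prodMk (measurable_pi_apply _)).prodMk
        (measurable_pi_apply _))
    exact h.comp (key i) (key j)
  · intro j
    have hmap : ∀ j, Measure.map (fun ω => ((W (p j) ω, W (q j) ω), W (r j) ω)) ℙ
        = ((Measure.map (W (p j)) ℙ).prod (Measure.map (W (q j)) ℙ)).prod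
          (Measure.map (W (r j)) ℙ) := by
      intro j
      have h1 := hW.indepFun_prodMk hm (p j) (q j) (r j) (hpr _ _) (hqr _ _)
      have h2 := hW.indepFun (hpq j j)
      rw [(indepFun_iff_map_prod_eq_prod_map_map ((hm _).prodMk (hm _)).aemeasurable
        (hm _).aemeasurable).1 h1, (indepFun_iff_map_prod_eq_prod_map_map (hm _).aemeasurable
        (hm _).aemeasurable).1 h2]
    have : IdentDistrib (fun ω => ((W (p j) ω, W (q j) ω), W (r j) ω))
        (fun ω => ((W (p 0) ω, W (q 0) ω), W (r 0) ω)) ℙ ℙ :=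
      ⟨(hmeas j).aemeasurable, (hmeas 0).aemeasurable, by
        rw [hmap, hmap, ep, eq, er]⟩
    exact this.comp hF

lemma core_integral {Ω : Type*} [MeasureSpace Ω] [IsProbabilityMeasure (ℙ : Measure Ω)]
    (a t u : Ω → ℝ) (ha : Measurable a) (ht : Measurable t) (hu : Measurable u)
    (htu : IndepFun t u ℙ) (hatu : IndepFun (fun ω => (t ω, u ω)) a ℙ)
    (hud : Measure.map u ℙ = volume.restrict (Set.Icc (0:ℝ) 1))
    (c k P : ℝ) (hP : (ℙ : Measure Ω).real {ω | a ω = k} = P)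
    (hc : ∀ ω, c * t ω ∈ Set.Icc (0:ℝ) 1) :
    ∫ ω, (if a ω = k then 1 else 0) * (if u ω ≤ c * t ω then (1:ℝ) else 0)
      = P * (c * ∫ ω, t ω) := by
  have m1 : Measurable (fun x : ℝ => if x = k then (1:ℝ) else 0) :=
    Measurable.ite (measurableSet_singleton k) measurable_const measurable_const
  have m2 : Measurable (fun x : ℝ × ℝ => if x.2 ≤ c * x.1 then (1:ℝ) else 0) :=
    Measurable.ite (measurableSet_le measurable_snd (measurable_fst.const_mul c))
      measurable_const measurable_const
  have hi := (hatu.comp m2 m1).symm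
  have h1 := hi.integral_fun_mul_eq_mul_integral
    (m1.comp ha).aestronglyMeasurable (m2.comp (ht.prodMk hu)).aestronglyMeasurable
  simp only [Function.comp_apply] at h1
  refine h1.trans ?_
  congr 1
  · rw [← hP]
    rw [← integral_indicator_one (measurableSet_eq_fun ha measurable_const)]
    congr 1
  · have hmap := (indepFun_iff_map_prod_eq_prod_map_map ht.aemeasurable hu.aemeasurable).1 htu
    have h2 : ∫ ω, (if u ω ≤ c * t ω then (1:ℝ) else 0)
        = ∫ x, (if x.2 ≤ c * x.1 then (1:ℝ) else 0) ∂(Measure.map (fun ω => (t ω, u ω)) ℙ) := by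
      rw [integral_map (ht.prodMk hu).aemeasurable m2.aestronglyMeasurable]
    rw [h2, hmap]
    have := Measure.isProbabilityMeasure_map (μ := (ℙ : Measure Ω)) ht.aemeasurable
    have := Measure.isProbabilityMeasure_map (μ := (ℙ : Measure Ω)) hu.aemeasurable
    rw [integral_prod _ (Integrable.of_bound m2.aestronglyMeasurable 1
      (Eventually.of_forall fun x => by split_ifs <;> simp))]
    rw [integral_map ht.aemeasurable]
    · rw [← integral_const_mul]
      congr 1
      ext ω
      rw [hud]
      have : (fun x : ℝ => if x ≤ c * t ω then (1:ℝ) else 0) = (Set.Iic (c * t ω)).indicator 1 := by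
        ext x; simp [Set.indicator]
      simp only [this]
      rw [integral_indicator_one measurableSet_Iic, measureReal_restrict_apply measurableSet_Iic]
      have h3 : Set.Iic (c * t ω) ∩ Set.Icc 0 1 = Set.Icc 0 (c * t ω) := by
        ext x
        simp only [Set.mem_inter_iff, Set.mem_Iic, Set.mem_Icc]
        have := (hc ω).2
        constructor
        · rintro ⟨h, h', _⟩; exact ⟨h', h⟩
        · rintro ⟨h, h'⟩; exact ⟨h', h, h'.trans this⟩
      rw [h3, Real.volume_real_Icc_of_le (hc ω).1, sub_zero]
    · exact (m2.stronglyMeasurable.integral_prod_right' (ν := Measure.map u ℙ)).aestronglyMeasurable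

/-- Real valued version of the joint family. -/
def realFamily {Ω : Type*} {K M : ℕ}
    (Y : ℕ → Ω → Fin K) (θ : ℕ → Ω → ℝ) (U : Fin M → ℕ → Ω → ℝ) :
    ℕ ⊕ (ℕ ⊕ Fin M × ℕ) → Ω → ℝ
  | Sum.inl j => fun ω => ((Y j ω : ℕ) : ℝ)
  | Sum.inr (Sum.inl j) => θ j
  | Sum.inr (Sum.inr (m, j)) => U m j

lemma realFamily_indep {Ω : Type*} [MeasureSpace Ω] {K M : ℕ}
    (Y : ℕ → Ω → Fin K) (θ : ℕ → Ω → ℝ) (U : Fin M → ℕ → Ω → ℝ)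
    (hIndep : iIndepFun (m := multigraphMS K M) (multigraphFamily Y θ U) ℙ) :
    iIndepFun (realFamily Y θ U) ℙ := by
  let g : ∀ i : ℕ ⊕ (ℕ ⊕ Fin M × ℕ),
      Sum.elim (fun _ : ℕ => Fin K) (fun _ : ℕ ⊕ Fin M × ℕ => ℝ) i → ℝ := fun i =>
    match i with
    | Sum.inl _ => fun x : Fin K => ((x : ℕ) : ℝ)
    | Sum.inr _ => fun x : ℝ => x
  have hg : ∀ i, @Measurable _ _ (multigraphMS K M i) _ (g i) := by
    rintro (i | i)
    · exact (measurable_of_finite (fun x : Fin K => ((x : ℕ) : ℝ)))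
    · exact (measurable_id : Measurable (fun x : ℝ => x))
  have h := iIndepFun.comp hIndep g hg
  convert h using 1
  ext i ω
  rcases i with i | i | ⟨m, i⟩ <;> rfl

/-- Theorem 1, Asymptotic Convergence: In the `M`-graph degree-corrected
stochastic block model setup, with encoder embedding rows
`Z m n ω k = (1/n_k(n)) ∑_{j < n, Y j = k} A m j ω`, almost surely each row `Z m n ω` is
nonzero for all sufficiently large `n`, and the fused normalized embedding converges to the
corresponding row of the row-normalized concatenated block matrix:
`‖[Z¹/‖Z¹‖₂ | … | Z^M/‖Z^M‖₂] − B̃(y,:)‖₂ → 0`. -/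
theorem fusion_encoder_embedding_tendsto
    {Ω : Type*} [MeasureSpace Ω] [IsProbabilityMeasure (ℙ : Measure Ω)]
    (K M : ℕ) (hK : 1 ≤ K) (hM : 1 ≤ M)
    (π : Fin K → ℝ) (hπ : ∀ k, π k ∈ Set.Ioo (0:ℝ) 1) (hπsum : ∑ k, π k = 1)
    (B : Fin M → Fin K → Fin K → ℝ) (hB : ∀ m k l, B m k l ∈ Set.Icc (0:ℝ) 1)
    (y : Fin K) (hBrow : ∀ m, (fun l => B m y l) ≠ 0)
    (θ₀ : ℝ) (hθ₀ : θ₀ ∈ Set.Ioc (0:ℝ) 1)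
    (δ Δ : ℝ) (hδ : 0 < δ) (hδΔ : δ ≤ Δ) (hΔ : Δ ≤ 1)
    (Y : ℕ → Ω → Fin K) (θ : ℕ → Ω → ℝ) (U : Fin M → ℕ → Ω → ℝ)
    (hYmeas : ∀ j, Measurable (Y j)) (hθmeas : ∀ j, Measurable (θ j))
    (hUmeas : ∀ m j, Measurable (U m j))
    (hYdist : ∀ j k, ℙ {ω | Y j ω = k} = ENNReal.ofReal (π k))
    (hθrange : ∀ j ω, θ j ω ∈ Set.Icc δ Δ)
    (hθdist : ∀ j, Measure.map (θ j) ℙ = Measure.map (θ 0) ℙ)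
    (hUdist : ∀ m j, Measure.map (U m j) ℙ = volume.restrict (Set.Icc (0:ℝ) 1))
    (hIndep : iIndepFun (m := multigraphMS K M) (multigraphFamily Y θ U) ℙ)
    (A : Fin M → ℕ → Ω → ℝ)
    (hA : ∀ m j ω, A m j ω = if U m j ω ≤ θ₀ * θ j ω * B m y (Y j ω) then 1 else 0)
    (Z : Fin M → ℕ → Ω → Fin K → ℝ)
    (hZ : ∀ m n ω k, Z m n ω k =
      (∑ j ∈ (Finset.range n).filter fun j => Y j ω = k, A m j ω) /
        ((((Finset.range n).filter fun j => Y j ω = k)).card : ℝ)) :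
    ∀ᵐ ω ∂ℙ,
      (∀ᶠ n in atTop, ∀ m, Z m n ω ≠ 0) ∧
      Tendsto (fun n =>
          Real.sqrt (∑ m : Fin M, ∑ k : Fin K,
            (Z m n ω k / Real.sqrt (∑ k' : Fin K, Z m n ω k' ^ 2) -
              B m y k / Real.sqrt (∑ k' : Fin K, B m y k' ^ 2)) ^ 2))
        atTop (nhds 0) := by
  classical
  set W := realFamily Y θ U with hWdef
  have hW : iIndepFun W ℙ := realFamily_indep Y θ U hIndep
  have hWm : ∀ i, Measurable (W i) := by
    rintro (i | i | ⟨m, i⟩)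
    · exact (measurable_of_finite (fun x : Fin K => ((x : ℕ) : ℝ))).comp (hYmeas i)
    · exact hθmeas i
    · exact hUmeas m i
  have hYset : ∀ j (k : Fin K), {ω | W (Sum.inl j) ω = ((k : ℕ) : ℝ)} = {ω | Y j ω = k} := by
    intro j k
    ext ω
    simp [hWdef, realFamily, Fin.ext_iff]
  -- identical law of labels
  have hYid : ∀ j, Measure.map (W (Sum.inl j)) ℙ = Measure.map (W (Sum.inl 0)) ℙ := by
    intro j
    have h0 : Measure.map (Y j) ℙ = Measure.map (Y 0) ℙ := by
      refine Measure.ext_of_singleton fun k => ?_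
      rw [Measure.map_apply (hYmeas j) (measurableSet_singleton k),
        Measure.map_apply (hYmeas 0) (measurableSet_singleton k)]
      exact (hYdist j k).trans (hYdist 0 k).symm
    have h1 : ∀ j, Measure.map (W (Sum.inl j)) ℙ
        = Measure.map (fun x : Fin K => ((x : ℕ) : ℝ)) (Measure.map (Y j) ℙ) := fun j =>
      (Measure.map_map (measurable_of_finite (fun x : Fin K => ((x : ℕ) : ℝ))) (hYmeas j)).symm
    rw [h1, h1, h0]
  have hreal : ∀ k : Fin K,
      (ℙ : Measure Ω).real {ω | W (Sum.inl 0) ω = ((k : ℕ) : ℝ)} = π k := by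
    intro k
    rw [hYset, Measure.real, hYdist, ENNReal.toReal_ofReal (hπ k).1.le]
  have hslln : ∀ (m : Fin M) (F : (ℝ × ℝ) × ℝ → ℝ), Measurable F → (∀ x, ‖F x‖ ≤ 1) →
      ∀ᵐ ω ∂(ℙ : Measure Ω), Tendsto (fun n : ℕ =>
        (∑ j ∈ Finset.range n, F ((W (Sum.inl j) ω, θ j ω), U m j ω)) / n) atTop
        (nhds (∫ ω, F ((W (Sum.inl 0) ω, θ 0 ω), U m 0 ω))) := by
    intro m F hF hb
    exact core_slln W hW hWm (fun j => Sum.inl j) (fun j => Sum.inr (Sum.inl j))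
      (fun j => Sum.inr (Sum.inr (m, j))) (fun i j h => by simpa using h)
      (fun i j h => by simpa using h) (fun i j h => by simpa using h)
      (by simp) (by simp) (by simp) hYid hθdist
      (fun j => (hUdist m j).trans (hUdist m 0).symm) F hF hb
  have mk : ∀ k : Fin K, Measurable (fun x : (ℝ × ℝ) × ℝ =>
      if x.1.1 = ((k : ℕ) : ℝ) then (1:ℝ) else 0) := fun k =>
    Measurable.ite (measurableSet_eq_fun measurable_fst.fst measurable_const)
      measurable_const measurable_const
  -- counts
  have hcount : ∀ k : Fin K, ∀ᵐ ω ∂(ℙ : Measure Ω), Tendsto (fun n : ℕ =>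
      (((Finset.range n).filter fun j => Y j ω = k).card : ℝ) / n) atTop (nhds (π k)) := by
    intro k
    have h := hslln ⟨0, hM⟩ _ (mk k) (fun x => by split_ifs <;> simp)
    have he : ∫ ω, (if W (Sum.inl 0) ω = ((k : ℕ) : ℝ) then (1:ℝ) else 0) = π k := by
      rw [← hreal k, ← integral_indicator_one
        (measurableSet_eq_fun (hWm _) measurable_const)]
      congr 1
    simp only [he] at h
    filter_upwards [h] with ω hω
    refine hω.congr fun n => ?_
    congr 1
    rw [Finset.card_filter]
    push_cast
    refine Finset.sum_congr rfl fun j _ => ?_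
    simp [hWdef, realFamily, Fin.ext_iff]
  set E : ℝ := ∫ ω, θ 0 ω with hE
  have hθint : Integrable (θ 0) (ℙ : Measure Ω) :=
    Integrable.of_bound (hθmeas 0).aestronglyMeasurable Δ (Eventually.of_forall fun ω => by
      rw [Real.norm_eq_abs, abs_of_nonneg (hδ.le.trans (hθrange 0 ω).1)]
      exact (hθrange 0 ω).2)
  have hEpos : 0 < E := by
    have : δ ≤ E := by
      have := integral_mono (μ := (ℙ : Measure Ω)) (integrable_const δ) hθint
        (fun ω => (hθrange 0 ω).1)
      simpa using this
    linarith
  have hedge : ∀ (m : Fin M) (k : Fin K), ∀ᵐ ω ∂(ℙ : Measure Ω), Tendsto (fun n : ℕ =>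
      (∑ j ∈ (Finset.range n).filter fun j => Y j ω = k, A m j ω) / n) atTop
      (nhds (π k * ((θ₀ * B m y k) * E))) := by
    intro m k
    have h := hslln m (fun x => (if x.1.1 = ((k : ℕ) : ℝ) then (1:ℝ) else 0) *
      (if x.2 ≤ (θ₀ * B m y k) * x.1.2 then (1:ℝ) else 0))
      ((mk k).mul (Measurable.ite (measurableSet_le measurable_snd
        (measurable_fst.snd.const_mul _)) measurable_const measurable_const))
      (fun x => by split_ifs <;> simp)
    have he := core_integral (W (Sum.inl 0)) (θ 0) (U m 0) (hWm _) (hθmeas 0) (hUmeas m 0)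
      (hW.indepFun (i := Sum.inr (Sum.inl 0)) (j := Sum.inr (Sum.inr (m, 0))) (by simp))
      (hW.indepFun_prodMk hWm (Sum.inr (Sum.inl 0)) (Sum.inr (Sum.inr (m, 0))) (Sum.inl 0)
        (by simp) (by simp)) (hUdist m 0) (θ₀ * B m y k) ((k : ℕ) : ℝ) (π k) (hreal k)
      (fun ω => by
        have h1 := hθrange 0 ω
        have h2 := hB m y k
        have h3 : 0 ≤ θ 0 ω := hδ.le.trans h1.1
        have h4 : θ 0 ω ≤ 1 := h1.2.trans hΔ
        exact ⟨mul_nonneg (mul_nonneg hθ₀.1.le h2.1) h3,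
          mul_le_one₀ (mul_le_one₀ hθ₀.2 h2.1 h2.2) h3 h4⟩)
    simp only [he] at h
    filter_upwards [h] with ω hω
    refine hω.congr fun n => ?_
    congr 1
    rw [Finset.sum_filter]
    refine Finset.sum_congr rfl fun j _ => ?_
    by_cases hk : Y j ω = k
    · rw [if_pos hk, hA, hk]
      have : W (Sum.inl j) ω = ((k : ℕ) : ℝ) := by simp [hWdef, realFamily, hk]
      rw [if_pos this, one_mul, mul_right_comm]
    · rw [if_neg hk, if_neg, zero_mul]
      intro h
      apply hk
      simpa [hWdef, realFamily, Fin.ext_iff] using h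
  have hcount' := ae_all_iff.2 hcount
  have hedge' := ae_all_iff.2 fun m => ae_all_iff.2 (hedge m)
  filter_upwards [hcount', hedge'] with ω hc he
  set c : ℝ := θ₀ * E with hcdef
  have hcpos : 0 < c := mul_pos hθ₀.1 hEpos
  have hZlim : ∀ m k, Tendsto (fun n => Z m n ω k) atTop (nhds (c * B m y k)) := by
    intro m k
    have h := (he m k).div (hc k) (hπ k).1.ne'
    have e : π k * ((θ₀ * B m y k) * E) / π k = c * B m y k := by
      have := (hπ k).1.ne'
      field_simp
      rw [hcdef]; ring
    rw [e] at h
    refine h.congr' ?_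
    filter_upwards [eventually_gt_atTop 0] with n hn
    have hn' : (n : ℝ) ≠ 0 := by positivity
    simp only [Pi.div_apply]
    rw [hZ, div_div_div_cancel_right₀ hn']
  have hBpos : ∀ m, 0 < ∑ k' : Fin K, B m y k' ^ 2 := by
    intro m
    obtain ⟨k, hk⟩ := Function.ne_iff.1 (hBrow m)
    have hk' : B m y k ≠ 0 := hk
    exact Finset.sum_pos' (fun i _ => sq_nonneg _) ⟨k, Finset.mem_univ _, by positivity⟩
  refine ⟨?_, ?_⟩
  · rw [eventually_all]
    intro m
    obtain ⟨k, hk⟩ := Function.ne_iff.1 (hBrow m)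
    have hk' : B m y k ≠ 0 := hk
    filter_upwards [(hZlim m k).eventually_ne (mul_ne_zero hcpos.ne' hk')] with n hn h0
    exact hn (by rw [h0]; rfl)
  · have hterm : ∀ m k, Tendsto (fun n =>
        (Z m n ω k / Real.sqrt (∑ k' : Fin K, Z m n ω k' ^ 2) -
          B m y k / Real.sqrt (∑ k' : Fin K, B m y k' ^ 2)) ^ 2) atTop (nhds 0) := by
      intro m k
      have hs : Tendsto (fun n => Real.sqrt (∑ k' : Fin K, Z m n ω k' ^ 2)) atTop
          (nhds (Real.sqrt (∑ k' : Fin K, (c * B m y k') ^ 2))) :=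
        (tendsto_finsetSum _ fun k' _ => (hZlim m k').pow 2).sqrt
      have e : Real.sqrt (∑ k' : Fin K, (c * B m y k') ^ 2)
          = c * Real.sqrt (∑ k' : Fin K, B m y k' ^ 2) := by
        simp only [mul_pow]
        rw [← Finset.mul_sum, Real.sqrt_mul (sq_nonneg c), Real.sqrt_sq hcpos.le]
      rw [e] at hs
      have hsp := Real.sqrt_pos.2 (hBpos m)
      have h := (((hZlim m k).div hs (mul_pos hcpos hsp).ne').sub_const
        (B m y k / Real.sqrt (∑ k' : Fin K, B m y k' ^ 2))).pow 2
      rw [mul_div_mul_left _ _ hcpos.ne', sub_self] at h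
      simpa using h
    have h := (tendsto_finsetSum (Finset.univ : Finset (Fin M)) fun m _ =>
      tendsto_finsetSum (Finset.univ : Finset (Fin K)) fun k _ => hterm m k).sqrt
    simpa using h
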